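/- In the restricted game RL^1(X,Y;v), the best guaranteed payoff of player X is no worse than the equilibrium value of the classic General Lotto game: sup_{F_X ∈ 𝔽(X)} inf_{F_Y ∈ 𝔽^1(Y)} π_X(F_X,F_Y) ≥ π_GL(X,Y), where π_GL(X,Y) := X/(2Y) if X ≤ Y and π_GL(X,Y) := 1 − Y/(2X) if X > Y. -/

import Mathlib

open MeasureTheory Finset

noncomputable section

/-- Admissible strategies for a player with budget `B`: Borel probability measures on `ℝ^C`
supported (i.e. concentrated, with full measure) on the nonnegative orthant, whose expected
total allocation is at most `B`. -/
def Strat (C : ℕ) (B : ℝ) : Set (Measure (Fin C → ℝ)) :=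
  {μ | IsProbabilityMeasure μ ∧ μ {x | ∀ c, 0 ≤ x c} = 1 ∧
    ∫⁻ x, ENNReal.ofReal (∑ c, x c) ∂μ ≤ ENNReal.ofReal B}

/-- Expected payoff to player `X`: `E[Σ_c v_c · 1{x_c ≥ y_c}]`. -/
def payoff (C : ℕ) (v : Fin C → ℝ) (F G : Measure (Fin C → ℝ)) : ℝ :=
  ∫ x, (∫ y, (∑ c, if y c ≤ x c then v c else 0) ∂G) ∂F

/-- Allocations `t·e_c` with at most one positive coordinate. -/
def R1 (C : ℕ) : Set (Fin C → ℝ) :=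
  {y | ∃ c : Fin C, ∃ t : ℝ, 0 ≤ t ∧ y = fun c' => if c' = c then t else 0}

/-- Restricted strategies: admissible strategies concentrated on `R1`. -/
def Strat1 (C : ℕ) (B : ℝ) : Set (Measure (Fin C → ℝ)) :=
  {μ | μ ∈ Strat C B ∧ μ (R1 C) = 1}

def ff (C : ℕ) (v : Fin C → ℝ) (k p : ℝ) : ℝ → (Fin C → ℝ) :=
  fun u c => v c * (k * max (p - u) 0)

def unif : Measure ℝ := volume.restrict (Set.Icc (0:ℝ) 1)

instance unif_prob : IsProbabilityMeasure unif := ⟨by simp [unif]⟩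

lemma ff_meas (C : ℕ) (v : Fin C → ℝ) (k p : ℝ) : Measurable (ff C v k p) := by
  unfold ff
  fun_prop

lemma int_max (p : ℝ) (h0 : 0 < p) (h1 : p ≤ 1) :
    ∫ u, max (p - u) 0 ∂unif = p ^ 2 / 2 := by
  unfold unif
  rw [integral_Icc_eq_integral_Ioc, ← intervalIntegral.integral_of_le zero_le_one]
  have hc : Continuous (fun u : ℝ => max (p - u) 0) := by fun_prop
  rw [← intervalIntegral.integral_add_adjacent_intervals
    (hc.intervalIntegrable 0 p) (hc.intervalIntegrable p 1)]
  have e1 : ∫ u in (0:ℝ)..p, max (p - u) 0 = ∫ u in (0:ℝ)..p, (p - u) := by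
    apply intervalIntegral.integral_congr
    intro u hu
    rw [Set.uIcc_of_le h0.le] at hu
    exact max_eq_left (by linarith [hu.2])
  have e2 : ∫ u in p..1, max (p - u) 0 = ∫ u in p..1, (0:ℝ) := by
    apply intervalIntegral.integral_congr
    intro u hu
    rw [Set.uIcc_of_le h1] at hu
    exact max_eq_right (by linarith [hu.1])
  rw [e1, e2]
  rw [intervalIntegral.integral_sub (by simp) (by simp)]
  simp
  ring

lemma ff_strat (C : ℕ) (v : Fin C → ℝ) (hpos : ∀ c, 0 < v c) (hsum : ∑ c, v c = 1)
    (k p : ℝ) (hk : 0 < k) (h0 : 0 < p) (h1 : p ≤ 1) :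
    Measure.map (ff C v k p) unif ∈ Strat C (k * (p ^ 2 / 2)) := by
  have hp : IsProbabilityMeasure (Measure.map (ff C v k p) unif) :=
    Measure.isProbabilityMeasure_map (ff_meas C v k p).aemeasurable
  have hm : MeasurableSet {x : Fin C → ℝ | ∀ c, 0 ≤ x c} := by
    rw [Set.ofPred_forall]
    exact MeasurableSet.iInter fun c => measurableSet_le measurable_const (measurable_pi_apply c)
  refine ⟨hp, ?_, ?_⟩
  · rw [Measure.map_apply (ff_meas C v k p) hm]
    have : ff C v k p ⁻¹' {x : Fin C → ℝ | ∀ c, 0 ≤ x c} = Set.univ := by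
      ext u
      simp only [Set.mem_preimage, Set.mem_ofPred_eq, Set.mem_univ, iff_true]
      intro c
      have := hpos c
      unfold ff
      positivity
    rw [this, measure_univ]
  · rw [lintegral_map (by fun_prop) (ff_meas C v k p)]
    have : ∀ u, ∑ c, ff C v k p u c = k * max (p - u) 0 := by
      intro u
      unfold ff
      rw [← Finset.sum_mul, hsum, one_mul]
    simp_rw [this]
    rw [← ofReal_integral_eq_lintegral_ofReal, integral_const_mul, int_max p h0 h1]
    · have hc : Continuous (fun u : ℝ => k * max (p - u) 0) := by fun_prop
      exact hc.integrableOn_Icc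
    · exact Filter.Eventually.of_forall fun u => by
        simp only [Pi.zero_apply]
        positivity

lemma tail (C : ℕ) (v : Fin C → ℝ) (hpos : ∀ c, 0 < v c)
    (k p : ℝ) (hk : 0 < k) (h1 : p ≤ 1) (c : Fin C) (y : ℝ) (hy : 0 ≤ y) :
    v c * p - y / k ≤ v c * (Measure.map (ff C v k p) unif).real {x | y ≤ x c} := by
  have hv := hpos c
  have : p - y / (k * v c) ≤ (Measure.map (ff C v k p) unif).real {x | y ≤ x c} := by
    rw [map_measureReal_apply (ff_meas C v k p)
      (measurableSet_le measurable_const (measurable_pi_apply c))]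
    have hq : 0 ≤ y / (k * v c) := by positivity
    have hsub : Set.Icc 0 (p - y / (k * v c)) ⊆ ff C v k p ⁻¹' {x | y ≤ x c} ∩ Set.Icc 0 1 := by
      intro u hu
      refine ⟨?_, hu.1, by linarith [hu.2]⟩
      simp only [Set.mem_preimage, Set.mem_ofPred_eq, ff]
      have h2 : y / (k * v c) ≤ max (p - u) 0 := le_max_of_le_left (by linarith [hu.2])
      rw [div_le_iff₀ (by positivity)] at h2
      linarith
    have h3 : unif.real (ff C v k p ⁻¹' {x | y ≤ x c})
        = volume.real (ff C v k p ⁻¹' {x | y ≤ x c} ∩ Set.Icc 0 1) := by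
      unfold unif
      rw [measureReal_restrict_apply' measurableSet_Icc]
    rw [h3]
    have h4 := measureReal_mono (μ := (volume : Measure ℝ)) hsub
      (measure_ne_top_of_subset Set.inter_subset_right (by simp))
    refine le_trans ?_ h4
    rw [Real.volume_real_Icc]
    simp
  calc v c * p - y / k = v c * (p - y / (k * v c)) := by field_simp
    _ ≤ _ := by gcongr

lemma g_meas (C : ℕ) (v : Fin C → ℝ) :
    Measurable (fun z : (Fin C → ℝ) × (Fin C → ℝ) => ∑ c, if z.2 c ≤ z.1 c then v c else 0) := by
  refine Finset.measurable_sum _ fun c _ => ?_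
  refine Measurable.ite (measurableSet_le (by fun_prop) (by fun_prop)) measurable_const
    measurable_const

lemma g_nonneg (C : ℕ) (v : Fin C → ℝ) (hpos : ∀ c, 0 < v c) (x y : Fin C → ℝ) :
    0 ≤ ∑ c, if y c ≤ x c then v c else 0 :=
  Finset.sum_nonneg fun c _ => by split_ifs; exacts [(hpos c).le, le_rfl]

lemma g_le (C : ℕ) (v : Fin C → ℝ) (hpos : ∀ c, 0 < v c) (hsum : ∑ c, v c = 1)
    (x y : Fin C → ℝ) : (∑ c, if y c ≤ x c then v c else 0) ≤ 1 := by
  rw [← hsum]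
  exact Finset.sum_le_sum fun c _ => by split_ifs; exacts [le_rfl, (hpos c).le]

lemma payoff_nonneg (C : ℕ) (v : Fin C → ℝ) (hpos : ∀ c, 0 < v c)
    (F G : Measure (Fin C → ℝ)) : 0 ≤ payoff C v F G :=
  integral_nonneg fun x => integral_nonneg fun y => g_nonneg C v hpos x y

lemma int_le_one {α : Type*} [MeasurableSpace α] (μ : Measure α) [IsProbabilityMeasure μ]
    (f : α → ℝ) (h0 : ∀ x, 0 ≤ f x) (h1 : ∀ x, f x ≤ 1) : ∫ x, f x ∂μ ≤ 1 := by
  have := integral_mono_of_nonneg (μ := μ) (f := f) (g := fun _ => 1)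
    (Filter.Eventually.of_forall h0) (integrable_const _) (Filter.Eventually.of_forall h1)
  simpa using this

lemma payoff_le (C : ℕ) (v : Fin C → ℝ) (hpos : ∀ c, 0 < v c) (hsum : ∑ c, v c = 1)
    (F G : Measure (Fin C → ℝ)) [IsProbabilityMeasure F] [IsProbabilityMeasure G] :
    payoff C v F G ≤ 1 :=
  int_le_one F _ (fun x => integral_nonneg fun y => g_nonneg C v hpos x y)
    fun x => int_le_one G _ (g_nonneg C v hpos x) (g_le C v hpos hsum x)

lemma dirac_mem (C : ℕ) (hC : 0 < C) (B : ℝ) : Measure.dirac (0 : Fin C → ℝ) ∈ Strat1 C B := by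
  refine ⟨⟨inferInstance, ?_, ?_⟩, ?_⟩
  · exact Measure.dirac_apply_of_mem (by simp)
  · rw [lintegral_dirac]
    simp
  · refine Measure.dirac_apply_of_mem ⟨⟨0, hC⟩, 0, le_rfl, ?_⟩
    ext c
    simp

set_option maxHeartbeats 2000000 in
lemma payoff_ge (C : ℕ) (v : Fin C → ℝ) (hpos : ∀ c, 0 < v c) (hsum : ∑ c, v c = 1)
    (k p Y : ℝ) (hk : 0 < k) (h1 : p ≤ 1) (hY : 0 < Y)
    (G : Measure (Fin C → ℝ)) (hG : G ∈ Strat C Y) :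
    p - Y / k ≤ payoff C v (Measure.map (ff C v k p) unif) G := by
  obtain ⟨hGp, hGn, hGb⟩ := hG
  have hp : IsProbabilityMeasure (Measure.map (ff C v k p) unif) :=
    Measure.isProbabilityMeasure_map (ff_meas C v k p).aemeasurable
  set F := Measure.map (ff C v k p) unif with hF
  have hint : Integrable (fun z : (Fin C → ℝ) × (Fin C → ℝ) =>
      ∑ c, if z.2 c ≤ z.1 c then v c else 0) (F.prod G) :=
    Integrable.of_bound (g_meas C v).aestronglyMeasurable 1
      (Filter.Eventually.of_forall fun z => by
        rw [Real.norm_of_nonneg (g_nonneg C v hpos _ _)]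
        exact g_le C v hpos hsum _ _)
  unfold payoff
  rw [integral_integral_swap (f := fun x y : Fin C → ℝ => ∑ c, if y c ≤ x c then v c else 0) hint]
  have hm : MeasurableSet {x : Fin C → ℝ | ∀ c, 0 ≤ x c} := by
    rw [Set.ofPred_forall]
    exact MeasurableSet.iInter fun c => measurableSet_le measurable_const (measurable_pi_apply c)
  have hae : ∀ᵐ y ∂G, ∀ c, 0 ≤ y c := (mem_ae_iff_prob_eq_one hm).2 hGn
  have hs0 : 0 ≤ᵐ[G] fun y => ∑ c, y c := hae.mono fun y hy => Finset.sum_nonneg fun c _ => hy c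
  have hsm : AEStronglyMeasurable (fun y : Fin C → ℝ => ∑ c, y c) G :=
    (by fun_prop : Measurable fun y : Fin C → ℝ => ∑ c, y c).aestronglyMeasurable
  have hsi : Integrable (fun y => ∑ c, y c) G :=
    ⟨hsm, (hasFiniteIntegral_iff_ofReal hs0).2 (hGb.trans_lt ENNReal.ofReal_lt_top)⟩
  have hsY : ∫ y, ∑ c, y c ∂G ≤ Y := by
    rw [integral_eq_lintegral_of_nonneg_ae hs0 hsm]
    exact ENNReal.toReal_le_of_le_ofReal hY.le hGb
  calc p - Y / k ≤ p - (∫ y, ∑ c, y c ∂G) / k := by gcongr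
    _ = ∫ y, (p - (∑ c, y c) / k) ∂G := by
      rw [integral_sub (integrable_const _) (hsi.div_const k), integral_div]
      simp
    _ ≤ _ := by
      refine integral_mono_ae ((integrable_const _).sub (hsi.div_const k))
        hint.integral_prod_right (hae.mono fun y hy => ?_)
      have hms : ∀ c, MeasurableSet {x : Fin C → ℝ | y c ≤ x c} := fun c =>
        measurableSet_le measurable_const (measurable_pi_apply c)
      have e : ∀ c, (fun x : Fin C → ℝ => if y c ≤ x c then v c else 0)
          = Set.indicator {x : Fin C → ℝ | y c ≤ x c} (fun _ => v c) := by
        intro c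
        ext x
        simp [Set.indicator]
      have e2 : ∫ x, ∑ c, (if y c ≤ x c then v c else 0) ∂F
          = ∑ c, v c * F.real {x | y c ≤ x c} := by
        rw [integral_finsetSum]
        · refine Finset.sum_congr rfl fun c _ => ?_
          rw [e c, integral_indicator_const _ (hms c), smul_eq_mul, mul_comm]
        · intro c _
          rw [e c]
          exact (integrable_const _).indicator (hms c)
      change _ ≤ ∫ x, ∑ c, (if y c ≤ x c then v c else 0) ∂F
      rw [e2]
      calc p - (∑ c, y c) / k = ∑ c, (v c * p - y c / k) := by
            rw [Finset.sum_sub_distrib, ← Finset.sum_mul, hsum, one_mul, Finset.sum_div]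
        _ ≤ _ := Finset.sum_le_sum fun c _ => tail C v hpos k p hk h1 c (y c) (hy c)

/-- in the restricted game `RL^1(X,Y;v)`, the best guaranteed payoff of
player X is at least the classic General Lotto equilibrium value `π_GL(X,Y)`. -/
theorem RL1_maxmin_ge_GL (C : ℕ) (hC : 0 < C) (v : Fin C → ℝ)
    (hpos : ∀ c, 0 < v c) (hsum : ∑ c, v c = 1)
    (X Y : ℝ) (hX : 0 < X) (hY : 0 < Y) :
    (if X ≤ Y then X / (2 * Y) else 1 - Y / (2 * X)) ≤
      ⨆ F : Strat C X, ⨅ G : Strat1 C Y, payoff C v F.1 G.1 := by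
  have key : ∀ k p : ℝ, 0 < k → 0 < p → p ≤ 1 → k * (p ^ 2 / 2) = X →
      p - Y / k ≤ ⨆ F : Strat C X, ⨅ G : Strat1 C Y, payoff C v F.1 G.1 := by
    intro k p hk h0 h1 hkX
    have hbb : ∀ F : Strat C X,
        BddBelow (Set.range fun G : Strat1 C Y => payoff C v F.1 G.1) := fun F =>
      ⟨0, by rintro _ ⟨G, rfl⟩; exact payoff_nonneg C v hpos _ _⟩
    have hF := ff_strat C v hpos hsum k p hk h0 h1
    rw [hkX] at hF
    have : Nonempty (Strat1 C Y) := ⟨⟨_, dirac_mem C hC Y⟩⟩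
    refine le_ciSup_of_le ?_ ⟨_, hF⟩ (le_ciInf fun G =>
      payoff_ge C v hpos hsum k p Y hk h1 hY G.1 G.2.1)
    refine ⟨1, ?_⟩
    rintro _ ⟨F, rfl⟩
    have := F.2.1
    exact (ciInf_le (hbb F) ⟨_, dirac_mem C hC Y⟩).trans (payoff_le C v hpos hsum _ _)
  split_ifs with h
  · have := key (2 * Y ^ 2 / X) (X / Y) (by positivity) (by positivity)
      ((div_le_one hY).2 h) (by field_simp)
    refine le_of_eq_of_le ?_ this
    field_simp
    ring
  · exact key (2 * X) 1 (by positivity) one_pos le_rfl (by ring)
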